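/- Fix positive reals α, h̄, c̄, ρ̄_s, s, e, m, n, T = tanθ and K ≥ 0, and assume K = 0. Define, for η > 0, λ±(η) := (−(a + α h̄ η²) ± √((a − α h̄ η²)² + 4 α η² a m h̄ c̄/ρ̄_s)) / 2. Then λ₊(η) and λ₋(η) are eigenvalues of A(0,η), and as η → +∞ one has λ₊(η) → a·(m c̄/ρ̄_s − 1) and λ₋(η)/η² → −α h̄. -/

import Mathlib

/-- The Fourier symbol `A(ξ,η) = A₀ + iξ·A₁ − (ξ²+η²)·A₂` of the linearized
landscape evolution system about the constant state `(h̄, c̄, 0)`, with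
`a = s·ρ̄ₛ/(e·h̄)` and slope parameter `T = tan θ`. -/
noncomputable def landA (α hb cb ρs s e m n T K : ℝ) (ξ η : ℝ) :
    Matrix (Fin 3) (Fin 3) ℂ :=
  ((!![0, 0, 0;
       (s * ρs / (e * hb)) * m * cb / hb, -(s * ρs / (e * hb)), 0;
       -((s * ρs / (e * hb)) * m * cb / ρs), (s * ρs / (e * hb)) * hb / ρs, 0] :
      Matrix (Fin 3) (Fin 3) ℝ).map Complex.ofReal)
  + (Complex.I * (ξ : ℂ)) •
    ((!![-T, 0, 0;
         -(α * (s * ρs / (e * hb)) * n * cb / T), -T,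
           -(α * (s * ρs / (e * hb)) * n * cb / T);
         α * (s * ρs / (e * hb)) * n * hb * cb / (ρs * T), 0,
           α * (s * ρs / (e * hb)) * n * hb * cb / (ρs * T)] :
        Matrix (Fin 3) (Fin 3) ℝ).map Complex.ofReal)
  - (((ξ ^ 2 + η ^ 2 : ℝ) : ℂ)) •
    ((!![α * hb, 0, α * hb; 0, 0, 0; 0, 0, K] :
        Matrix (Fin 3) (Fin 3) ℝ).map Complex.ofReal)

/-- Spectral stability: every eigenvalue (root of the characteristic
polynomial) has strictly negative real part. -/
def SpectrallyStable (A : Matrix (Fin 3) (Fin 3) ℂ) : Prop :=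
  ∀ z : ℂ, A.charpoly.IsRoot z → z.re < 0

open Filter

/-- The two nonzero eigenvalues `λ±(η)` of `A(0,η)` when `K = 0`. -/
noncomputable def lamP (α hb cb ρs a m : ℝ) (η : ℝ) : ℝ :=
  (-(a + α * hb * η ^ 2) +
      Real.sqrt ((a - α * hb * η ^ 2) ^ 2 + 4 * α * η ^ 2 * a * m * hb * cb / ρs)) / 2

noncomputable def lamM (α hb cb ρs a m : ℝ) (η : ℝ) : ℝ :=
  (-(a + α * hb * η ^ 2) -
      Real.sqrt ((a - α * hb * η ^ 2) ^ 2 + 4 * α * η ^ 2 * a * m * hb * cb / ρs)) / 2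

theorem land_root (α hb cb ρs s e m n T η l : ℝ) (hhb : hb ≠ 0)
    (h : l ^ 2 + (s * ρs / (e * hb) + α * hb * η ^ 2) * l
      + (s * ρs / (e * hb)) * (α * hb * η ^ 2) * (1 - m * cb / ρs) = 0) :
    (landA α hb cb ρs s e m n T 0 0 η).charpoly.IsRoot (l : ℂ) := by
  generalize ha : s * ρs / (e * hb) = a at h
  rw [Polynomial.IsRoot.def, Matrix.eval_charpoly, Matrix.det_fin_three]
  unfold landA
  rw [ha]
  have hq : a * m * cb / hb * hb = a * m * cb := by field_simp
  have h2 : ((l * (l ^ 2 + (a + α * hb * η ^ 2) * l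
      + a * (α * hb * η ^ 2) * (1 - m * cb / ρs)) : ℝ) : ℂ) = 0 := by
    rw [h]; simp
  have hhb' : (hb : ℂ) ≠ 0 := by exact_mod_cast hhb
  rw [← h2]
  simp
  field_simp
  ring

theorem lam_quad (a b d D : ℝ) (l : ℝ) (hD : 0 ≤ D) (hd : D = (a - b) ^ 2 + 4 * a * b * d)
    (hl : l = (-(a + b) + √D) / 2 ∨ l = (-(a + b) - √D) / 2) :
    l ^ 2 + (a + b) * l + a * b * (1 - d) = 0 := by
  have := Real.sq_sqrt hD
  rcases hl with rfl | rfl <;> nlinarith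

/-- High-frequency asymptotics of the transverse spectrum when `K = 0`:
`λ±(η)` are eigenvalues of `A(0,η)`, and as `η → +∞`,
`λ₊(η) → a(mc̄/ρ̄ₛ − 1)` while `λ₋(η)/η² → −αh̄`. -/
theorem transverse_no_creep_high_frequency (α hb cb ρs s e m n T : ℝ)
    (hα : 0 < α) (hhb : 0 < hb) (hcb : 0 < cb) (hρs : 0 < ρs)
    (hs : 0 < s) (he : 0 < e) (hm : 0 < m) (hn : 0 < n) (hT : 0 < T) :
    (∀ η : ℝ, 0 < η →
      (landA α hb cb ρs s e m n T 0 0 η).charpoly.IsRoot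
        ((lamP α hb cb ρs (s * ρs / (e * hb)) m η : ℝ) : ℂ) ∧
      (landA α hb cb ρs s e m n T 0 0 η).charpoly.IsRoot
        ((lamM α hb cb ρs (s * ρs / (e * hb)) m η : ℝ) : ℂ)) ∧
    Tendsto (fun η : ℝ => lamP α hb cb ρs (s * ρs / (e * hb)) m η) atTop
      (nhds ((s * ρs / (e * hb)) * (m * cb / ρs - 1))) ∧
    Tendsto (fun η : ℝ => lamM α hb cb ρs (s * ρs / (e * hb)) m η / η ^ 2) atTop
      (nhds (-(α * hb))) := by
  have hapos : 0 < s * ρs / (e * hb) := by positivity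
  have hdisc : ∀ η : ℝ, 0 ≤ (s * ρs / (e * hb) - α * hb * η ^ 2) ^ 2 +
      4 * α * η ^ 2 * (s * ρs / (e * hb)) * m * hb * cb / ρs := fun η => by positivity
  have hP : ∀ η : ℝ, _ := fun η => lam_quad (s * ρs / (e * hb)) (α * hb * η ^ 2) (m * cb / ρs) _
    (lamP α hb cb ρs (s * ρs / (e * hb)) m η) (hdisc η) (by ring) (Or.inl rfl)
  have hM : ∀ η : ℝ, _ := fun η => lam_quad (s * ρs / (e * hb)) (α * hb * η ^ 2) (m * cb / ρs) _
    (lamM α hb cb ρs (s * ρs / (e * hb)) m η) (hdisc η) (by ring) (Or.inr rfl)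
  have hlim : Tendsto (fun η : ℝ => lamM α hb cb ρs (s * ρs / (e * hb)) m η / η ^ 2) atTop
      (nhds (-(α * hb))) := by
    generalize s * ρs / (e * hb) = a
    have ht : Tendsto (fun η : ℝ => (η ^ 2)⁻¹) atTop (nhds 0) :=
      tendsto_inv_atTop_zero.comp (tendsto_pow_atTop (by norm_num))
    have hc : Continuous (fun t : ℝ => (-(a * t + α * hb) -
        √((a * t - α * hb) ^ 2 + 4 * α * a * m * hb * cb / ρs * t)) / 2) := by fun_prop
    have h0 := (hc.tendsto 0).comp ht
    have hv : (-(a * 0 + α * hb) -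
        √((a * 0 - α * hb) ^ 2 + 4 * α * a * m * hb * cb / ρs * 0)) / 2 = -(α * hb) := by
      have : (a * 0 - α * hb) ^ 2 + 4 * α * a * m * hb * cb / ρs * 0 = (α * hb) ^ 2 := by ring
      rw [this, Real.sqrt_sq (by positivity)]; ring
    rw [hv] at h0
    refine h0.congr' ?_
    filter_upwards [eventually_gt_atTop 0] with η hη
    have hs : (a - α * hb * η ^ 2) ^ 2 + 4 * α * η ^ 2 * a * m * hb * cb / ρs =
        (η ^ 2) ^ 2 * ((a * (η ^ 2)⁻¹ - α * hb) ^ 2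
          + 4 * α * a * m * hb * cb / ρs * (η ^ 2)⁻¹) := by
      field_simp
    simp only [Function.comp, lamM]
    rw [hs, Real.sqrt_mul (by positivity), Real.sqrt_sq (by positivity)]
    field_simp
  refine ⟨fun η _ => ⟨land_root α hb cb ρs s e m n T η _ hhb.ne' (hP η),
    land_root α hb cb ρs s e m n T η _ hhb.ne' (hM η)⟩, ?_, hlim⟩
  have hne : -(α * hb) ≠ 0 := by
    have : 0 < α * hb := by positivity
    exact (neg_lt_zero.mpr this).ne
  have h1 := (tendsto_const_nhds
    (x := (s * ρs / (e * hb)) * (α * hb) * (1 - m * cb / ρs))).div hlim hne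
  have hv : (s * ρs / (e * hb)) * (α * hb) * (1 - m * cb / ρs) / -(α * hb) =
      (s * ρs / (e * hb)) * (m * cb / ρs - 1) := by
    generalize s * ρs / (e * hb) = a
    field_simp
    ring
  rw [hv] at h1
  refine h1.congr' ?_
  filter_upwards [eventually_gt_atTop 0] with η hη
  have hneg : lamM α hb cb ρs (s * ρs / (e * hb)) m η < 0 := by
    unfold lamM
    have := Real.sqrt_nonneg ((s * ρs / (e * hb) - α * hb * η ^ 2) ^ 2 +
      4 * α * η ^ 2 * (s * ρs / (e * hb)) * m * hb * cb / ρs)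
    have h3 : 0 < α * hb * η ^ 2 := by positivity
    linarith
  have hsum : lamP α hb cb ρs (s * ρs / (e * hb)) m η =
      -(s * ρs / (e * hb) + α * hb * η ^ 2) - lamM α hb cb ρs (s * ρs / (e * hb)) m η := by
    unfold lamM lamP; ring
  have hq := hM η
  rw [hsum, Pi.div_apply, div_div_eq_mul_div]
  generalize lamM α hb cb ρs (s * ρs / (e * hb)) m η = l at *
  generalize s * ρs / (e * hb) = a at *
  generalize m * cb / ρs = d at *
  have hl : l ≠ 0 := hneg.ne
  rw [div_eq_iff hl]
  linarith
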